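/- For every finite coloring ℕ = C₁ ∪ … ∪ C_r there exist an index s and an infinite sequence (b_n) of natural numbers (with b_n ≥ 2) such that b_n ∈ C_s and (b_{n+1})^{b_n} ∈ C_s for every n. -/

import Mathlib

open scoped Classical

noncomputable def upperDensity (A : Set ℕ) : ℝ :=
  Filter.limsup (fun n => (((Finset.Icc 1 n).filter (fun m => m ∈ A)).card : ℝ) / n) Filter.atTop

noncomputable def lowerDensity (A : Set ℕ) : ℝ :=
  Filter.liminf (fun n => (((Finset.Icc 1 n).filter (fun m => m ∈ A)).card : ℝ) / n) Filter.atTop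

/-- The difference set Δ(X) = {x' - x : x, x' ∈ X, x' > x}. -/
def diffSet (X : Set ℕ) : Set ℕ := {d | ∃ x ∈ X, ∃ x' ∈ X, x < x' ∧ x' - x = d}

/-- A is thick if it contains arbitrarily long intervals of consecutive integers. -/
def Thick (A : Set ℕ) : Prop := ∀ k : ℕ, ∃ a : ℕ, ∀ i < k, a + i ∈ A

/-- A is a Δ-set if it contains the difference set of some infinite X. -/
def IsDeltaSet (A : Set ℕ) : Prop := ∃ X : Set ℕ, X.Infinite ∧ diffSet X ⊆ A


/-- An ultrafilter on positive naturals all of whose members contain an FS-set. -/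
theorem aux_ultra : ∃ U : Ultrafilter ℕ, (∀ᶠ m in U, 0 < m) ∧
    ∀ s ∈ U, ∃ a : Stream' ℕ, Hindman.FS a ⊆ s := by
  obtain ⟨U, hU, hFS⟩ := Hindman.exists_idempotent_ultrafilter_le_FS (Stream'.const (1 : ℕ))
  refine ⟨U, ?_, fun s hs => Hindman.exists_FS_of_large U hU s hs⟩
  have key : ∀ (a : Stream' ℕ) (m : ℕ), Hindman.FS a m → a = Stream'.const 1 → 0 < m := by
    intro a m h
    induction h with
    | head' a => rintro rfl; simp [Stream'.head, Stream'.const, Stream'.get]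
    | tail' a m h ih => rintro rfl; exact ih (Stream'.tail_const 1)
    | cons' a m h ih => rintro rfl; have := ih (Stream'.tail_const 1); omega
  filter_upwards [hFS] with m hm
  exact key _ m hm rfl

/-- Counting: a finite cover of `ℕ` has a part with large difference set. -/
theorem aux_count (r : ℕ) (A : Fin r → Set ℕ) (hA : ∀ n, ∃ s, n ∈ A s) (S : Fin r → ℕ → ℕ)
    (hS : ∀ s i j, i < j → ∀ a a', a ∈ A s → a' ∈ A s → a + S s i ≠ a' + S s j) : False := by
  set M := ∑ s, ∑ i ∈ Finset.range (r + 1), S s i with hM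
  have hle : ∀ s, ∀ i ∈ Finset.range (r + 1), S s i ≤ M := by
    intro s i hi
    refine le_trans (Finset.single_le_sum (f := fun i => S s i) (fun _ _ => Nat.zero_le _) hi) ?_
    exact Finset.single_le_sum (f := fun s => ∑ i ∈ Finset.range (r + 1), S s i)
      (fun _ _ => Nat.zero_le _) (Finset.mem_univ s)
  set N := r * M + 1 with hN
  have hcard : ∀ s, ((Finset.range N).filter (fun n => n ∈ A s)).card * (r + 1) ≤ N + M := by
    intro s
    have := Finset.card_le_card_of_injOn
      (s := ((Finset.range N).filter (fun n => n ∈ A s)) ×ˢ Finset.range (r + 1))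
      (t := Finset.range (N + M)) (fun q => q.1 + S s q.2) ?_ ?_
    · simpa using this
    · rintro ⟨a, i⟩ h
      simp only [Finset.coe_product, Set.mem_prod, Finset.mem_coe, Finset.mem_filter] at h
      have h1 := Finset.mem_range.1 h.1.1
      have h2 := hle s i h.2
      simp only [Finset.coe_range, Set.mem_Iio]
      omega
    · rintro ⟨a, i⟩ h ⟨a', i'⟩ h' heq
      simp only [Finset.coe_product, Set.mem_prod, Finset.mem_coe, Finset.mem_filter] at h h' heq
      rcases lt_trichotomy i i' with hi | hi | hi
      · exact (hS s i i' hi a a' h.1.2 h'.1.2 heq).elim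
      · subst hi
        have : a = a' := by omega
        rw [this]
      · exact (hS s i' i hi a' a h'.1.2 h.1.2 heq.symm).elim
  have hcov : N ≤ ∑ s, ((Finset.range N).filter (fun n => n ∈ A s)).card := by
    have h1 : Finset.range N ⊆
        Finset.univ.biUnion (fun s => (Finset.range N).filter (fun n => n ∈ A s)) := by
      intro n hn
      obtain ⟨s, hs⟩ := hA n
      exact Finset.mem_biUnion.2 ⟨s, Finset.mem_univ _, Finset.mem_filter.2 ⟨hn, hs⟩⟩
    have h2 := (Finset.card_le_card h1).trans Finset.card_biUnion_le
    simpa using h2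
  have h3 : N * (r + 1) ≤ r * (N + M) := by
    calc N * (r + 1) ≤ (∑ s, ((Finset.range N).filter (fun n => n ∈ A s)).card) * (r + 1) :=
          Nat.mul_le_mul_right _ hcov
      _ = ∑ s, ((Finset.range N).filter (fun n => n ∈ A s)).card * (r + 1) := Finset.sum_mul _ _ _
      _ ≤ ∑ _s : Fin r, (N + M) := Finset.sum_le_sum (fun s _ => hcard s)
      _ = r * (N + M) := by simp
  nlinarith

theorem stmt15 (r : ℕ) (C : Fin r → Set ℕ) (hcover : (⋃ i, C i) = Set.univ) :
    ∃ s, ∃ b : ℕ → ℕ, ∀ n : ℕ,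
      2 ≤ b n ∧ b n ∈ C s ∧ (b (n + 1)) ^ (b n) ∈ C s := by
  obtain ⟨U, hpos, hU⟩ := aux_ultra
  let A : Fin r → Set ℕ := fun s => {n | ∀ᶠ t in U, 2 ^ (2 ^ n * t) ∈ C s}
  let R : Fin r → Set ℕ := fun s => {d | ∃ a, a ∈ A s ∧ a + d ∈ A s}
  have hA : ∀ n, ∃ s, n ∈ A s := by
    intro n
    have h : ∀ᶠ t in U, ∃ s, 2 ^ (2 ^ n * t) ∈ C s := by
      refine Filter.Eventually.of_forall fun t => ?_
      have : 2 ^ (2 ^ n * t) ∈ ⋃ i, C i := by rw [hcover]; trivial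
      simpa using this
    exact Ultrafilter.eventually_exists_iff.1 h
  have hR : ∃ s, ∀ m, ∀ᶠ t in U, 2 ^ m * t ∈ R s := by
    by_contra hcon
    push Not at hcon
    have h2 : ∀ s, ∃ S : ℕ → ℕ, ∀ i j, i < j → ∀ a a', a ∈ A s → a' ∈ A s →
        a + S i ≠ a' + S j := by
      intro s
      obtain ⟨m, hm⟩ := hcon s
      have hm' : ∀ᶠ t in U, ¬ (2 ^ m * t ∈ R s) :=
        hm
      obtain ⟨x, hx⟩ := hU _ hm'
      refine ⟨fun i => 2 ^ m * ∑ k ∈ Finset.range i, x.get k, ?_⟩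
      intro i j hij a a' ha ha' heq
      have hs := hx (Hindman.FS.finsetSum x (Finset.Ico i j) (Finset.nonempty_Ico.2 hij))
      apply hs
      refine ⟨a', ha', ?_⟩
      have h4 := Finset.sum_range_add_sum_Ico (fun k => x.get k) hij.le
      simp only at heq
      rw [← h4, mul_add] at heq
      have : a' + 2 ^ m * ∑ k ∈ Finset.Ico i j, x.get k = a := by omega
      rw [this]
      exact ha
    choose S hS using h2
    exact aux_count r A hA S hS
  obtain ⟨s, hs⟩ := hR
  let Q : Set ℕ := {x | 0 < x ∧ 2 ^ x ∈ C s ∧ x ∈ R s}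
  have step : ∀ x ∈ R s, ∃ y, y ∈ Q ∧ 2 ^ (2 ^ x * y) ∈ C s := by
    rintro x ⟨m, hm, hmx⟩
    obtain ⟨t, h1, h2, h3, h4⟩ := (hpos.and (hm.and (Filter.Eventually.and hmx (hs m)))).exists
    refine ⟨2 ^ m * t, ⟨by positivity, h2, h4⟩, ?_⟩
    rw [← mul_assoc, ← pow_add, add_comm x m]
    exact h3
  obtain ⟨x0, hx0⟩ := (hs 0).exists
  obtain ⟨y0, hy0, -⟩ := step _ hx0
  have step' : ∀ x : Q, ∃ y : Q, 2 ^ (2 ^ x.1 * y.1) ∈ C s := fun x => by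
    obtain ⟨y, hy, h⟩ := step x.1 x.2.2.2
    exact ⟨⟨y, hy⟩, h⟩
  choose f hf using step'
  let q : ℕ → Q := fun n => f^[n] ⟨y0, hy0⟩
  refine ⟨s, fun n => 2 ^ (q n).1, fun n => ⟨?_, (q n).2.2.1, ?_⟩⟩
  · exact Nat.le_self_pow (q n).2.1.ne' 2
  · have h := hf (q n)
    have hq : q (n + 1) = f (q n) := Function.iterate_succ_apply' f n _
    simp only
    rw [hq, ← pow_mul, mul_comm]
    exact h
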